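/- Let X ∈ ℂ^{d₁×p}, Y ∈ ℂ^{d₂×p}, Z ∈ ℂ^{d₃×p} be matrices whose columns give a CP decomposition of the third-order tensor 𝒳 ∈ ℂ^{d₁×d₂×d₃}, i.e. 𝒳(i,j,k) = Σ_{r=1}^{p} X(i,r)·Y(j,r)·Z(k,r) for all i,j,k. Suppose Kruskal's condition k_X + k_Y + k_Z ≥ 2p + 2 holds, where k_M denotes the k-rank of M. If X̂ ∈ ℂ^{d₁×p}, Ŷ ∈ ℂ^{d₂×p}, Ẑ ∈ ℂ^{d₃×p} also satisfy 𝒳(i,j,k) = Σ_{r=1}^{p} X̂(i,r)·Ŷ(j,r)·Ẑ(k,r) for all i,j,k, then there exist a permutation σ of {1,…,p} and nonzero complex scalars λ_r, μ_r, ν_r with λ_r·μ_r·ν_r = 1 for each r, such that X̂(·,r) = λ_r·X(·,σ(r)), Ŷ(·,r) = μ_r·Y(·,σ(r)), and Ẑ(·,r) = ν_r·Z(·,σ(r)) for all r. -/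

import Mathlib

/-- The k-rank of a matrix `M`: the largest `k` such that every subset of `k`
columns of `M` is linearly independent. -/
noncomputable def kRank {d p : ℕ} (M : Matrix (Fin d) (Fin p) ℂ) : ℕ :=
  sSup {k | k ≤ p ∧ ∀ s : Finset (Fin p), s.card = k →
    LinearIndependent ℂ (fun j : s => fun i : Fin d => M i j)}

/-- Every set of at most `k` of the vectors is independent. -/
def KruskalIndep {K E ι : Type*} [Field K] [AddCommGroup E] [Module K E]
    (k : ℕ) (x : ι → E) : Prop :=
  ∀ s : Finset ι, s.card ≤ k → LinearIndepOn K x (s : Set ι)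

section Abstract
open Module

variable {K E F G ι : Type*} [Field K] [AddCommGroup E] [Module K E]
  [AddCommGroup F] [Module K F] [AddCommGroup G] [Module K G]

lemma exists_dual_values {x : ι → E} {S : Set ι} (h : LinearIndepOn K x S) (v : ι → K) :
    ∃ α : Dual K E, ∀ r ∈ S, α (x r) = v r := by
  have h' : LinearIndependent K (fun i : S => x i) := h
  obtain ⟨g, hg⟩ := LinearMap.exists_extend ((Basis.span h').constr K (fun i : S => v i))
  refine ⟨g, fun r hr => ?_⟩
  have e : ((Basis.span h' ⟨r, hr⟩ : Submodule.span K (Set.range fun i : S => x i)) : E) = x r :=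
    congrArg Subtype.val (Basis.span_apply h' ⟨r, hr⟩)
  have := LinearMap.congr_fun hg (Basis.span h' ⟨r, hr⟩)
  rw [Basis.constr_basis] at this
  simpa [e] using this

lemma rank_lower [FiniteDimensional K E] [FiniteDimensional K F]
    {x : ι → E} {y : ι → F} {a b : ℕ} (hx : KruskalIndep (K := K) a x)
    (hy : KruskalIndep (K := K) b y) (S : Finset ι) (ha : a ≤ S.card) (hb : b ≤ S.card)
    (c : ι → K) (hc : ∀ r ∈ S, c r ≠ 0) (M : Dual K E →ₗ[K] F)
    (hM : ∀ α, M α = ∑ r ∈ S, (c r * α (x r)) • y r) :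
    a + b ≤ finrank K (LinearMap.range M) + S.card := by
  classical
  let f : Dual K E →ₗ[K] (S → K) := LinearMap.pi (fun r => Dual.eval K E (x r))
  let g : (S → K) →ₗ[K] F := Fintype.linearCombination K (fun r : S => c r • y r)
  have hMgf : M = g ∘ₗ f := by
    ext α
    rw [hM]
    simp only [f, g, LinearMap.comp_apply, Fintype.linearCombination_apply, LinearMap.pi_apply,
      Dual.eval_apply]
    rw [← Finset.sum_coe_sort S]
    refine Finset.sum_congr rfl fun r _ => ?_
    rw [smul_smul, mul_comm]
  have hf : a ≤ finrank K (LinearMap.range f) := by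
    obtain ⟨T, hTS, hT⟩ := Finset.exists_subset_card_eq ha
    have hi := hx T hT.le
    let ρ : (S → K) →ₗ[K] (T → K) := LinearMap.funLeft K K (fun t : T => (⟨t, hTS t.2⟩ : S))
    have hs : LinearMap.range (ρ ∘ₗ f) = ⊤ := by
      rw [LinearMap.range_eq_top]
      intro v
      obtain ⟨α, hα⟩ := exists_dual_values hi (fun r => if h : r ∈ T then v ⟨r, h⟩ else 0)
      refine ⟨α, ?_⟩
      ext t
      have := hα t t.2
      simp only [t.2, dite_true] at this
      simpa [ρ, f, LinearMap.funLeft_apply] using this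
    have h1 : finrank K (LinearMap.range (ρ ∘ₗ f)) = a := by
      rw [hs, finrank_top, finrank_fintype_fun_eq_card, Fintype.card_coe, hT]
    rw [← h1, LinearMap.range_comp]
    exact Submodule.finrank_map_le _ _
  have hg : b ≤ finrank K (LinearMap.range g) := by
    obtain ⟨T, hTS, hT⟩ := Finset.exists_subset_card_eq hb
    have hi : LinearIndependent K (fun t : T => y t) := hy T hT.le
    have h1 := finrank_span_eq_card hi
    rw [Fintype.card_coe, hT] at h1
    rw [← h1]
    apply Submodule.finrank_mono
    rw [Submodule.span_le]
    rintro _ ⟨t, rfl⟩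
    refine ⟨Pi.single ⟨t, hTS t.2⟩ (c t)⁻¹, ?_⟩
    simp only [g, Fintype.linearCombination_apply_single]
    rw [smul_smul, inv_mul_cancel₀ (hc _ (hTS t.2)), one_smul]
  have hrn := LinearMap.finrank_range_add_finrank_ker g
  rw [finrank_fintype_fun_eq_card, Fintype.card_coe] at hrn
  let R := LinearMap.range f
  have hrn2 := LinearMap.finrank_range_add_finrank_ker (g.domRestrict R)
  have hk : finrank K (LinearMap.ker (g.domRestrict R)) ≤ finrank K (LinearMap.ker g) := by
    have : finrank K (LinearMap.ker (g.domRestrict R)) =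
      finrank K ((LinearMap.ker (g.domRestrict R)).map R.subtype) :=
      (Submodule.finrank_map_subtype_eq _ _).symm
    rw [this]
    apply Submodule.finrank_mono
    rintro _ ⟨w, hw, rfl⟩
    simpa using hw
  have hr : LinearMap.range (g.domRestrict R) = LinearMap.range M := by
    rw [hMgf, LinearMap.range_comp, LinearMap.range_domRestrict]
  rw [hr] at hrn2
  have : finrank K R = finrank K (LinearMap.range f) := rfl
  omega

lemma rank_upper [FiniteDimensional K F]
    {x : ι → E} {y : ι → F} (S : Finset ι)
    (c : ι → K) (M : Dual K E →ₗ[K] F)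
    (hM : ∀ α, M α = ∑ r ∈ S, (c r * α (x r)) • y r) :
    finrank K (LinearMap.range M) ≤ S.card := by
  classical
  calc finrank K (LinearMap.range M) ≤ finrank K (Submodule.span K ((S.image y : Finset F) : Set F)) := by
        apply Submodule.finrank_mono
        rintro _ ⟨α, rfl⟩
        rw [hM]
        exact Submodule.sum_mem _ fun r hr => Submodule.smul_mem _ _
          (Submodule.subset_span (by simpa using ⟨r, hr, rfl⟩))
    _ ≤ (S.image y).card := finrank_span_finset_le_card _
    _ ≤ S.card := Finset.card_image_le

open scoped Classical in
/-- Counting form of Kruskal's permutation lemma. -/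
lemma perm_count [Fintype ι] [FiniteDimensional K E] (c c' : ι → E)
    (h : ∀ φ : Dual K E,
      (Finset.univ.filter fun r => φ (c' r) ≠ 0).card + finrank K (Submodule.span K (Set.range c'))
        ≤ Fintype.card ι + 1 →
      (Finset.univ.filter fun r => φ (c r) ≠ 0).card ≤
        (Finset.univ.filter fun r => φ (c' r) ≠ 0).card) :
    ∀ (n : ℕ) (S : Set ι),
      finrank K (Submodule.span K (Set.range c')) ≤ finrank K (Submodule.span K (c' '' S)) + n →
      (Finset.univ.filter fun r => c' r ∈ Submodule.span K (c' '' S)).card ≤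
      (Finset.univ.filter fun r => c r ∈ Submodule.span K (c' '' S)).card := by
  set W := Submodule.span K (Set.range c') with hWdef
  have hc'W : ∀ r, c' r ∈ W := fun r => Submodule.subset_span ⟨r, rfl⟩
  have hWle : finrank K W ≤ Fintype.card ι := finrank_range_le_card c'
  have hcW : ∀ r, c r ∈ W := by
    intro r
    by_contra hr
    obtain ⟨φ, h1, h2⟩ := Submodule.exists_le_ker_of_notMem hr
    have h0 : (Finset.univ.filter fun r => φ (c' r) ≠ 0) = ∅ := by
      ext s; simpa using h2 (hc'W s)
    have := h φ (by rw [h0]; simp; omega)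
    rw [h0, Finset.card_empty, Nat.le_zero, Finset.card_eq_zero] at this
    have hm : r ∈ (Finset.univ.filter fun r => φ (c r) ≠ 0) := by simpa using h1
    rw [this] at hm
    simp at hm
  have hVW : ∀ S : Set ι, Submodule.span K (c' '' S) ≤ W := fun S =>
    Submodule.span_mono (Set.image_subset_range _ _)
  have htop : ∀ S : Set ι, finrank K W ≤ finrank K (Submodule.span K (c' '' S)) →
      (Finset.univ.filter fun r => c' r ∈ Submodule.span K (c' '' S)).card ≤
      (Finset.univ.filter fun r => c r ∈ Submodule.span K (c' '' S)).card := by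
    intro S hS
    have := Submodule.eq_of_le_of_finrank_le (hVW S) hS
    rw [this]
    simp [hcW, hc'W]
  intro n
  induction n with
  | zero => exact fun S hS => htop S hS
  | succ n ih =>
    intro S hS
    set V := Submodule.span K (c' '' S) with hV
    by_cases hVn : finrank K W ≤ finrank K V
    · exact htop S hVn
    by_cases hV1 : finrank K W = finrank K V + 1
    · -- hyperplane case
      have hne : ¬ W ≤ V := fun hle => hVn (Submodule.finrank_mono hle)
      obtain ⟨w, hwW, hwV⟩ := SetLike.not_le_iff_exists.mp hne
      obtain ⟨φ, h1, h2⟩ := Submodule.exists_le_ker_of_notMem hwV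
      have hWV : V = LinearMap.ker φ ⊓ W := by
        apply Submodule.eq_of_le_of_finrank_le (le_inf h2 (hVW S))
        have : LinearMap.ker φ ⊓ W < W := by
          refine lt_of_le_of_ne inf_le_right fun he => h1 ?_
          have := hwW
          rw [← he] at this
          exact this.1
        have := Submodule.finrank_lt_finrank_of_lt this
        omega
      have e1 : ∀ e : E, e ∈ W → (e ∈ V ↔ φ e = 0) := by
        intro e he
        rw [hWV]; simp [he]
      have e2 : (Finset.univ.filter fun r => c' r ∈ V) = Finset.univ.filter fun r => φ (c' r) = 0 := by
        ext r; simp [e1 _ (hc'W r)]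
      have e3 : (Finset.univ.filter fun r => c r ∈ V) = Finset.univ.filter fun r => φ (c r) = 0 := by
        ext r; simp [e1 _ (hcW r)]
      have e4 := Finset.card_filter_add_card_filter_not (s := (Finset.univ : Finset ι)) (fun r => φ (c' r) = 0)
      have e5 := Finset.card_filter_add_card_filter_not (s := (Finset.univ : Finset ι)) (fun r => φ (c r) = 0)
      have e6 : finrank K V ≤ (Finset.univ.filter fun r => c' r ∈ V).card := by
        calc finrank K V ≤ finrank K (Submodule.span K
              (((Finset.univ.filter fun r => c' r ∈ V).image c' : Finset E) : Set E)) := by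
              apply Submodule.finrank_mono
              rw [hV]
              apply Submodule.span_mono
              rintro _ ⟨r, hr, rfl⟩
              simp only [Finset.coe_image, Finset.coe_filter]
              exact ⟨r, ⟨Finset.mem_univ _, Submodule.subset_span ⟨r, hr, rfl⟩⟩, rfl⟩
          _ ≤ _ := finrank_span_finset_le_card _
          _ ≤ _ := Finset.card_image_le
      rw [e2] at e6 ⊢
      rw [e3]
      rw [Finset.card_univ] at e4 e5
      have := h φ (by simp only [ne_eq]; omega)
      simp only [ne_eq] at this
      omega
    · -- inductive case
      let g : E → Submodule K E := fun e => V ⊔ Submodule.span K {e}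
      have hge : ∀ e, e ∈ g e := fun e =>
        (le_sup_right : _ ≤ g e) (Submodule.mem_span_singleton_self e)
      have hgfin : ∀ e, finrank K (g e) ≤ finrank K V + 1 := fun e =>
        (Submodule.finrank_add_le_finrank_add_finrank _ _).trans
          (Nat.add_le_add_left ((finrank_span_le_card {e}).trans (by simp)) _)
      have hVg : ∀ e, V ≤ g e := fun e => le_sup_left
      have hglt : ∀ e, e ∉ V → finrank K V < finrank K (g e) := fun e he =>
        Submodule.finrank_lt_finrank_of_lt (lt_of_le_of_ne (hVg e) fun hh => he (hh ▸ hge e))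
      have hgeq : ∀ e f, e ∉ V → f ∉ V → (e ∈ g f ↔ g e = g f) := by
        intro e f he hf
        constructor
        · intro hef
          apply Submodule.eq_of_le_of_finrank_le
          · exact sup_le (hVg f) ((Submodule.span_singleton_le_iff_mem _ _).2 hef)
          · have := hgfin f
            have := hglt e he
            omega
        · intro hh; rw [← hh]; exact hge e
      set A' := Finset.univ.filter fun r => c' r ∉ V with hA'
      set A := Finset.univ.filter fun r => c r ∉ V with hA
      set T := A'.image (fun r => g (c' r)) with hT
      have hcount : ∀ (d : ι → E), ∀ P ∈ T,
          (Finset.univ.filter fun r => d r ∈ P).card =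
          (Finset.univ.filter fun r => d r ∈ V).card +
          ((Finset.univ.filter fun r => d r ∉ V).filter fun r => g (d r) = P).card := by
        intro d P hP
        obtain ⟨s, hs, rfl⟩ := Finset.mem_image.1 hP
        have hsV : c' s ∉ V := by simpa [hA'] using hs
        rw [← Finset.card_union_of_disjoint]
        · congr 1
          ext r
          simp only [Finset.mem_filter, Finset.mem_univ, true_and, Finset.mem_union]
          by_cases hr : d r ∈ V
          · simp [hr, hVg _ hr]
          · simp [hr, hgeq _ _ hr hsV]
        · rw [Finset.disjoint_left]
          intro r h1 h2
          simp at h1 h2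
          exact h2.1 h1
      have hT1 : A'.card = ∑ P ∈ T, (A'.filter fun r => g (c' r) = P).card :=
        Finset.card_eq_sum_card_image _ _
      have hT2 : ∑ P ∈ T, (A.filter fun r => g (c r) = P).card ≤ A.card :=
        (Finset.sum_card_fiberwise_eq_card_filter _ _ _).trans_le (Finset.card_filter_le _ _)
      have hle : ∀ P ∈ T, (Finset.univ.filter fun r => c' r ∈ V).card + (A'.filter fun r => g (c' r) = P).card
          ≤ (Finset.univ.filter fun r => c r ∈ V).card + (A.filter fun r => g (c r) = P).card := by
        intro P hP
        rw [← hcount c' P hP, ← hcount c P hP]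
        obtain ⟨s, hs, rfl⟩ := Finset.mem_image.1 hP
        have hsV : c' s ∉ V := by simpa [hA'] using hs
        have hg : g (c' s) = Submodule.span K (c' '' (insert s S)) := by
          rw [Set.image_insert_eq, Submodule.span_insert, sup_comm]
        have := hglt _ hsV
        rw [hg] at this ⊢
        apply ih
        omega
      have hsum := Finset.sum_le_sum hle
      simp only [Finset.sum_add_distrib, Finset.sum_const, smul_eq_mul] at hsum
      have e4 := Finset.card_filter_add_card_filter_not (s := (Finset.univ : Finset ι)) (fun r => c' r ∈ V)
      have e5 := Finset.card_filter_add_card_filter_not (s := (Finset.univ : Finset ι)) (fun r => c r ∈ V)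
      have hT2' : 2 ≤ T.card := by
        by_contra hlt
        have hT1 : T.card ≤ 1 := by omega
        rw [Finset.card_le_one] at hT1
        by_cases hemp : ∃ s, c' s ∉ V
        · obtain ⟨s, hs⟩ := hemp
          have hm : ∀ r, c' r ∉ V → g (c' r) ∈ T := fun r hr =>
            Finset.mem_image.2 ⟨r, by simpa [hA'] using hr, rfl⟩
          have : W ≤ g (c' s) := by
            rw [hWdef, Submodule.span_le]
            rintro _ ⟨r, rfl⟩
            by_cases hr : c' r ∈ V
            · exact hVg _ hr
            · exact (hT1 _ (hm r hr) _ (hm s hs)) ▸ hge (c' r)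
          have := Submodule.finrank_mono this
          have := hgfin (c' s)
          omega
        · push Not at hemp
          apply hVn
          apply Submodule.finrank_mono
          rw [hWdef, Submodule.span_le]
          rintro _ ⟨r, rfl⟩
          exact hemp r
      by_contra hcon
      push Not at hcon
      have hA1 : A'.card = (Finset.univ.filter fun r => ¬ c' r ∈ V).card := rfl
      have hA2 : A.card = (Finset.univ.filter fun r => ¬ c r ∈ V).card := rfl
      rw [← hT1] at hsum
      obtain ⟨t, ht⟩ := Nat.exists_eq_add_of_le hT2'
      rw [ht] at hsum
      nlinarith

lemma tri_vec [Fintype ι] {x x' : ι → E} {y y' : ι → F} {z z' : ι → G}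
    (h : ∀ (α : Dual K E) (β : Dual K F) (γ : Dual K G),
      ∑ r, α (x' r) * β (y' r) * γ (z' r) = ∑ r, α (x r) * β (y r) * γ (z r))
    (γ : Dual K G) (α : Dual K E) :
    ∑ r, (γ (z' r) * α (x' r)) • y' r = ∑ r, (γ (z r) * α (x r)) • y r := by
  rw [← sub_eq_zero, ← Module.forall_dual_apply_eq_zero_iff K]
  intro β
  rw [map_sub, map_sum, map_sum, sub_eq_zero]
  simp only [map_smul, smul_eq_mul]
  convert h α β γ using 2 <;> ring

/-- The bilinear form with coefficients `c`. -/
def formMap [Fintype ι] (x : ι → E) (y : ι → F) (c : ι → K) : Dual K E →ₗ[K] F :=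
  ∑ r, c r • (LinearMap.toSpanSingleton K F (y r)) ∘ₗ (Dual.eval K E (x r))

lemma formMap_apply [Fintype ι] (x : ι → E) (y : ι → F) (c : ι → K) (α : Dual K E) :
    formMap x y c α = ∑ r, (c r * α (x r)) • y r := by
  simp [formMap, LinearMap.sum_apply, smul_smul]

open scoped Classical in
lemma formMap_apply_supp [Fintype ι] (x : ι → E) (y : ι → F) (c : ι → K) (α : Dual K E) :
    formMap x y c α = ∑ r ∈ Finset.univ.filter (fun r => c r ≠ 0), (c r * α (x r)) • y r := by
  rw [formMap_apply, Finset.sum_filter]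
  refine Finset.sum_congr rfl fun r _ => ?_
  by_cases h : c r = 0 <;> simp [h]

lemma KruskalIndep.mono {x : ι → E} {a b : ℕ} (h : KruskalIndep (K := K) a x) (hab : b ≤ a) :
    KruskalIndep (K := K) b x := fun s hs => h s (hs.trans hab)

open scoped Classical in
lemma weight_ineq [Fintype ι] [FiniteDimensional K E] [FiniteDimensional K F]
    {x x' : ι → E} {y y' : ι → F} {a b : ℕ} (hx : KruskalIndep (K := K) a x)
    (hy : KruskalIndep (K := K) b y) (c c' : ι → K)
    (h : ∀ α : Dual K E, ∑ r, (c' r * α (x' r)) • y' r = ∑ r, (c r * α (x r)) • y r) :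
    min a (Finset.univ.filter fun r => c r ≠ 0).card +
      min b (Finset.univ.filter fun r => c r ≠ 0).card ≤
    (Finset.univ.filter fun r => c' r ≠ 0).card + (Finset.univ.filter fun r => c r ≠ 0).card := by
  have h1 := rank_lower (hx.mono (min_le_left _ _)) (hy.mono (min_le_left _ _))
    (Finset.univ.filter fun r => c r ≠ 0) (min_le_right a _) (min_le_right b _) c (by simp)
    (formMap x y c) (formMap_apply_supp x y c)
  have e : formMap x' y' c' = formMap x y c := by
    ext α
    rw [formMap_apply, formMap_apply, h]
  have h2 := rank_upper (Finset.univ.filter fun r => c' r ≠ 0) c' (formMap x' y' c')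
    (formMap_apply_supp x' y' c')
  rw [e] at h2
  omega

open scoped Classical in
lemma coeff_zero [Fintype ι] [FiniteDimensional K E] [FiniteDimensional K F]
    {x : ι → E} {y : ι → F} {a b : ℕ} (hx : KruskalIndep (K := K) a x)
    (hy : KruskalIndep (K := K) b y) (ha : a ≤ Fintype.card ι) (hb : b ≤ Fintype.card ι)
    (hab : Fintype.card ι + 2 ≤ a + b) (c : ι → K)
    (h : ∀ α : Dual K E, ∑ r, (c r * α (x r)) • y r = 0) : ∀ r, c r = 0 := by
  have h1 := weight_ineq (x' := x) (y' := y) hx hy c (fun _ => 0) (by intro α; rw [h]; simp)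
  have h2 : (Finset.univ.filter fun r => c r ≠ 0).card ≤ Fintype.card ι := Finset.card_le_univ _
  simp only [ne_eq, not_true_eq_false, Finset.filter_false, Finset.card_empty] at h1 h2
  have h3 : (Finset.univ.filter fun r => ¬ c r = 0).card = 0 := by omega
  intro r
  by_contra hr
  rw [Finset.card_eq_zero] at h3
  have : r ∈ (Finset.univ.filter fun r => ¬ c r = 0) := by simpa using hr
  rw [h3] at this
  simp at this

lemma KruskalIndep.pair {x : ι → E} {a : ℕ} (h : KruskalIndep (K := K) a x) (ha : 2 ≤ a)
    {i j : ι} (hij : i ≠ j) (s t : K) (he : s • x i + t • x j = 0) : s = 0 ∧ t = 0 := by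
  classical
  have := h {i, j} (Finset.card_le_two.trans ha)
  rw [Finset.coe_pair, LinearIndepOn.pair_iff _ hij] at this
  exact this s t he

lemma KruskalIndep.ne_zero {x : ι → E} {a : ℕ} (h : KruskalIndep (K := K) a x) (ha : 2 ≤ a)
    (i : ι) : x i ≠ 0 := by
  have := h {i} (by simp; omega)
  exact this.ne_zero (by simp)

open scoped Classical in
lemma one_mode [Fintype ι] [FiniteDimensional K E] [FiniteDimensional K F] [FiniteDimensional K G]
    {x x' : ι → E} {y y' : ι → F} {z z' : ι → G} {a b d : ℕ}
    (hx : KruskalIndep (K := K) a x) (hy : KruskalIndep (K := K) b y)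
    (hz : KruskalIndep (K := K) d z)
    (ha : a ≤ Fintype.card ι) (hb : b ≤ Fintype.card ι) (hd : d ≤ Fintype.card ι)
    (hk : 2 * Fintype.card ι + 2 ≤ a + b + d)
    (h : ∀ (α : Dual K E) (β : Dual K F) (γ : Dual K G),
      ∑ r, α (x' r) * β (y' r) * γ (z' r) = ∑ r, α (x r) * β (y r) * γ (z r)) :
    ∃ (σ : Equiv.Perm ι) (lam : ι → K), (∀ r, lam r ≠ 0) ∧ ∀ r, z' r = lam r • z (σ r) := by
  have hw : ∀ φ : Dual K G, _ := fun φ =>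
    weight_ineq hx hy (fun r => φ (z r)) (fun r => φ (z' r)) (tri_vec h φ)
  have hspan : Submodule.span K (Set.range z) ≤ Submodule.span K (Set.range z') := by
    rw [Submodule.span_le]
    rintro _ ⟨r, rfl⟩
    by_contra hr
    obtain ⟨φ, h1, h2⟩ := Submodule.exists_le_ker_of_notMem hr
    apply h1
    refine coeff_zero hx hy ha hb (by omega) (fun r => φ (z r)) (fun α => ?_) r
    rw [← tri_vec h φ α]
    refine Finset.sum_eq_zero fun s _ => ?_
    have : φ (z' s) = 0 := h2 (Submodule.subset_span ⟨s, rfl⟩)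
    simp [this]
  have hdr : d ≤ finrank K (Submodule.span K (Set.range z')) := by
    refine le_trans ?_ (Submodule.finrank_mono hspan)
    obtain ⟨T, -, hT⟩ := Finset.exists_subset_card_eq (s := (Finset.univ : Finset ι)) hd
    have hi : LinearIndependent K (fun t : T => z t) := hz T hT.le
    have h1 := finrank_span_eq_card hi
    rw [Fintype.card_coe, hT] at h1
    rw [← h1]
    apply Submodule.finrank_mono
    apply Submodule.span_mono
    rintro _ ⟨t, rfl⟩
    exact ⟨t, rfl⟩
  have hcount := perm_count (K := K) z z' (by
    intro φ hφ
    have := hw φ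
    have h2 : (Finset.univ.filter fun r => φ (z r) ≠ 0).card ≤ Fintype.card ι :=
      Finset.card_le_univ _
    simp only [ne_eq] at this hφ h2 ⊢
    omega) (finrank K (Submodule.span K (Set.range z')))
  have hd2 : 2 ≤ d := by omega
  have hz'0 : ∀ r, z' r ≠ 0 := by
    intro r hr
    have := hcount ∅ (by omega)
    simp only [Set.image_empty, Submodule.span_empty, Submodule.mem_bot] at this
    have e : (Finset.univ.filter fun r => z r = 0) = ∅ := by
      ext s; simpa using hz.ne_zero hd2 s
    rw [e, Finset.card_empty, Nat.le_zero, Finset.card_eq_zero] at this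
    have hm : r ∈ (Finset.univ.filter fun r => z' r = 0) := by simpa using hr
    rw [this] at hm
    simp at hm
  have hle1 : ∀ r, (Finset.univ.filter fun s => z s ∈ Submodule.span K {z' r}).card ≤ 1 := by
    intro r
    rw [Finset.card_le_one]
    intro s hs t ht
    simp only [Finset.mem_filter, Finset.mem_univ, true_and, Submodule.mem_span_singleton] at hs ht
    obtain ⟨u, hu⟩ := hs
    obtain ⟨v, hv⟩ := ht
    by_contra hst
    have := hz.pair hd2 hst v (-u) (by rw [← hu, ← hv, smul_smul, smul_smul, ← add_smul]; ring_nf; simp)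
    rw [this.1, zero_smul] at hv
    exact hz.ne_zero hd2 t hv.symm
  have hle2 : ∀ r, (Finset.univ.filter fun s => z' s ∈ Submodule.span K {z' r}).card ≤
      (Finset.univ.filter fun s => z s ∈ Submodule.span K {z' r}).card := by
    intro r
    have := hcount {r} (by omega)
    simpa only [Set.image_singleton] using this
  have hex : ∀ r, ∃ s, ∃ l : K, l ≠ 0 ∧ z' r = l • z s := by
    intro r
    have h1 : 0 < (Finset.univ.filter fun s => z' s ∈ Submodule.span K {z' r}).card :=
      Finset.card_pos.2 ⟨r, by simpa using Submodule.mem_span_singleton_self (z' r)⟩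
    obtain ⟨s, hs⟩ := Finset.card_pos.1 (h1.trans_le (hle2 r))
    simp only [Finset.mem_filter, Finset.mem_univ, true_and, Submodule.mem_span_singleton] at hs
    obtain ⟨u, hu⟩ := hs
    have hu0 : u ≠ 0 := by
      rintro rfl
      rw [zero_smul] at hu
      exact hz.ne_zero hd2 s hu.symm
    exact ⟨s, u⁻¹, inv_ne_zero hu0, by rw [← hu, smul_smul, inv_mul_cancel₀ hu0, one_smul]⟩
  choose σ lam hlam hσ using hex
  have hinj : Function.Injective σ := by
    intro r t hrt
    have hc := (hle2 r).trans (hle1 r)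
    rw [Finset.card_le_one] at hc
    apply hc
    · simpa using Submodule.mem_span_singleton_self (z' r)
    · simp only [Finset.mem_filter, Finset.mem_univ, true_and, Submodule.mem_span_singleton]
      refine ⟨lam t * (lam r)⁻¹, ?_⟩
      rw [hσ t, hσ r, hrt, smul_smul, mul_assoc, inv_mul_cancel₀ (hlam r), mul_one]
  exact ⟨Equiv.ofBijective σ (Finite.injective_iff_bijective.1 hinj), lam, hlam, hσ⟩

open scoped Classical in
/-- A functional separating two indices with small support. -/
lemma exists_small_support [Fintype ι] {z : ι → G} {d : ℕ} (hz : KruskalIndep (K := K) d z)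
    (hd : d ≤ Fintype.card ι) (hd2 : 2 ≤ d) {s u : ι} (hsu : s ≠ u) :
    ∃ φ : Dual K G, φ (z s) ≠ 0 ∧ φ (z u) = 0 ∧
      (Finset.univ.filter fun r => φ (z r) ≠ 0).card + d ≤ Fintype.card ι + 1 := by
  obtain ⟨T, hT1, -, hT2⟩ := Finset.exists_subsuperset_card_eq (s := {s, u})
    (t := (Finset.univ : Finset ι)) (Finset.subset_univ _) (n := d)
    (Finset.card_le_two.trans hd2) (by simpa using hd)
  have hs : s ∈ T := hT1 (by simp)
  have hu : u ∈ T := hT1 (by simp)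
  obtain ⟨φ, hφ⟩ := exists_dual_values (hz T hT2.le) (fun r => if r = s then 1 else 0)
  refine ⟨φ, by simp [hφ s hs], by simp [hφ u hu, hsu.symm], ?_⟩
  have hsub : (Finset.univ.filter fun r => φ (z r) ≠ 0) ⊆ (T.erase s)ᶜ := by
    intro r hr
    simp only [Finset.mem_filter, Finset.mem_univ, true_and, Finset.mem_compl, Finset.mem_erase,
      not_and] at hr ⊢
    intro hrs hrT
    apply hr
    rw [hφ r hrT, if_neg hrs]
  have h1 := Finset.card_le_card hsub
  rw [Finset.card_compl, Finset.card_erase_of_mem hs, hT2] at h1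
  omega

open scoped Classical in
lemma perm_eq [Fintype ι]
    {x x' : ι → E} {y y' : ι → F} {z z' : ι → G} {a b d : ℕ}
    (hx : KruskalIndep (K := K) a x) (hy : KruskalIndep (K := K) b y)
    (hz : KruskalIndep (K := K) d z)
    (ha : a ≤ Fintype.card ι) (hb : b ≤ Fintype.card ι) (hd : d ≤ Fintype.card ι)
    (hk : 2 * Fintype.card ι + 2 ≤ a + b + d)
    (h : ∀ (α : Dual K E) (β : Dual K F) (γ : Dual K G),
      ∑ r, α (x' r) * β (y' r) * γ (z' r) = ∑ r, α (x r) * β (y r) * γ (z r))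
    (σ τ ρ : Equiv.Perm ι) (lam mu nu : ι → K)
    (hlam : ∀ r, lam r ≠ 0) (hmu : ∀ r, mu r ≠ 0) (hnu : ∀ r, nu r ≠ 0)
    (hσ : ∀ r, x' r = lam r • x (σ r)) (hτ : ∀ r, y' r = mu r • y (τ r))
    (hρ : ∀ r, z' r = nu r • z (ρ r)) : σ = ρ := by
  ext q
  by_contra hne
  obtain ⟨φ, h1, h2, h3⟩ := exists_small_support (K := K) hz hd (by omega) (Ne.symm hne)
  set T := Finset.univ.filter fun r => φ (z r) ≠ 0 with hT
  have hTm : ∀ r, r ∈ T ↔ φ (z r) ≠ 0 := by simp [hT]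
  -- the relevant indices for `y`
  let U : Finset ι := T.image (fun t => τ (ρ.symm t))
  have hU : U.card ≤ b := Finset.card_image_le.trans (by omega)
  obtain ⟨β, hβ⟩ := exists_dual_values (hy U hU) (fun r => if r = τ q then 1 else 0)
  -- a functional on `x` vanishing on `T` but not at `σ q`
  have hV : (insert (σ q) T).card ≤ a := (Finset.card_insert_le _ _).trans (by omega)
  obtain ⟨α, hα⟩ := exists_dual_values (hx _ hV) (fun r => if r = σ q then 1 else 0)
  have hqT : σ q ∉ T := by rw [hTm]; simpa using h2
  have hR : ∑ r, α (x r) * β (y r) * φ (z r) = 0 := by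
    refine Finset.sum_eq_zero fun r _ => ?_
    by_cases hr : r ∈ T
    · rw [hα r (by simp [hr]), if_neg (by rintro rfl; exact hqT hr)]
      simp
    · have : φ (z r) = 0 := by simpa [hTm] using hr
      simp [this]
  have hL : ∑ r, α (x' r) * β (y' r) * φ (z' r) = lam q * mu q * (nu q * φ (z (ρ q))) := by
    rw [Finset.sum_eq_single q]
    · have hqU : τ q ∈ U := Finset.mem_image.2 ⟨ρ q, (hTm _).2 h1, by simp⟩
      rw [hσ, hτ, hρ]
      simp only [map_smul, smul_eq_mul]
      rw [hβ _ hqU, hα (σ q) (by simp)]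
      simp
    · intro r _ hr
      by_cases hrT : ρ r ∈ T
      · have hrU : τ r ∈ U := Finset.mem_image.2 ⟨ρ r, hrT, by simp⟩
        have : β (y (τ r)) = 0 := by
          rw [hβ _ hrU, if_neg (by simpa using hr)]
        simp [hτ, this]
      · have : φ (z (ρ r)) = 0 := by simpa [hTm] using hrT
        simp [hρ, this]
    · simp
  rw [h, hR] at hL
  have := mul_ne_zero (mul_ne_zero (hlam q) (hmu q)) (mul_ne_zero (hnu q) h1)
  exact this hL.symm

theorem kruskal_abstract [Fintype ι] [FiniteDimensional K E] [FiniteDimensional K F]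
    [FiniteDimensional K G]
    {x x' : ι → E} {y y' : ι → F} {z z' : ι → G} {a b d : ℕ}
    (hx : KruskalIndep (K := K) a x) (hy : KruskalIndep (K := K) b y)
    (hz : KruskalIndep (K := K) d z)
    (ha : a ≤ Fintype.card ι) (hb : b ≤ Fintype.card ι) (hd : d ≤ Fintype.card ι)
    (hk : 2 * Fintype.card ι + 2 ≤ a + b + d)
    (h : ∀ (α : Dual K E) (β : Dual K F) (γ : Dual K G),
      ∑ r, α (x' r) * β (y' r) * γ (z' r) = ∑ r, α (x r) * β (y r) * γ (z r)) :
    ∃ (σ : Equiv.Perm ι) (lam mu nu : ι → K),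
      (∀ r, lam r ≠ 0 ∧ mu r ≠ 0 ∧ nu r ≠ 0 ∧ lam r * mu r * nu r = 1) ∧
      (∀ r, x' r = lam r • x (σ r)) ∧ (∀ r, y' r = mu r • y (σ r)) ∧
      (∀ r, z' r = nu r • z (σ r)) := by
  obtain ⟨ρ, nu, hnu, hρ⟩ := one_mode hx hy hz ha hb hd hk h
  obtain ⟨τ, mu, hmu, hτ⟩ := one_mode hx hz hy ha hd hb (by omega) (by
    intro α γ β
    convert h α β γ using 2 <;> ring)
  obtain ⟨σ, lam, hlam, hσ⟩ := one_mode hy hz hx hb hd ha (by omega) (by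
    intro β γ α
    convert h α β γ using 2 <;> ring)
  have e1 : σ = ρ := perm_eq hx hy hz ha hb hd hk h σ τ ρ lam mu nu hlam hmu hnu hσ hτ hρ
  have e2 : τ = ρ := perm_eq hy hx hz hb ha hd (by omega) (by
    intro β α γ
    convert h α β γ using 2 <;> ring) τ σ ρ mu lam nu hmu hlam hnu hτ hσ hρ
  subst e1
  subst e2
  refine ⟨τ, lam, mu, nu, fun r => ⟨hlam r, hmu r, hnu r, ?_⟩, hσ, hτ, hρ⟩
  by_contra hne
  apply hz.ne_zero (by omega) (τ r)
  rw [← Module.forall_dual_apply_eq_zero_iff K]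
  intro γ
  have := coeff_zero hx hy ha hb (by omega)
    (fun s => (lam (τ.symm s) * mu (τ.symm s) * nu (τ.symm s) - 1) * γ (z s)) (by
      intro α
      have h1 := tri_vec h γ α
      rw [← Equiv.sum_comp τ (fun r => (γ (z r) * α (x r)) • y r)] at h1
      rw [← Equiv.sum_comp τ]
      rw [← sub_eq_zero, ← Finset.sum_sub_distrib] at h1
      rw [← h1]
      refine Finset.sum_congr rfl fun s _ => ?_
      rw [hσ, hτ, hρ]
      simp only [Equiv.symm_apply_apply, map_smul, smul_eq_mul, smul_smul]
      rw [← sub_smul]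
      congr 1
      ring) (τ r)
  simp only [Equiv.symm_apply_apply] at this
  exact (mul_eq_zero.1 this).resolve_left (sub_ne_zero.2 hne)

end Abstract

lemma kRank_spec {d p : ℕ} (M : Matrix (Fin d) (Fin p) ℂ) :
    kRank M ≤ p ∧ KruskalIndep (K := ℂ) (kRank M) (fun r i => M i r) := by
  have hm : kRank M ∈ {k | k ≤ p ∧ ∀ s : Finset (Fin p), s.card = k →
      LinearIndependent ℂ (fun j : s => fun i : Fin d => M i j)} := by
    apply Nat.sSup_mem
    · refine ⟨0, Nat.zero_le _, fun s hs => ?_⟩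
      rw [Finset.card_eq_zero] at hs
      subst hs
      exact linearIndependent_empty_type
    · exact ⟨p, fun k hk => hk.1⟩
  refine ⟨hm.1, fun s hs => ?_⟩
  obtain ⟨t, hst, ht⟩ := Finset.exists_superset_card_eq hs (by simpa using hm.1)
  have h2 : LinearIndepOn ℂ (fun r i => M i r) (t : Set (Fin p)) := hm.2 t ht
  exact h2.mono (by exact_mod_cast hst)

lemma dual_apply_sum {d : ℕ} (α : Module.Dual ℂ (Fin d → ℂ)) (v : Fin d → ℂ) :
    α v = ∑ i, v i * α (Pi.single i 1) := by
  have := LinearMap.pi_apply_eq_sum_univ α v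
  rw [this]
  refine Finset.sum_congr rfl fun i _ => ?_
  rw [smul_eq_mul]
  congr 2
  ext j
  simp [Pi.single_apply, eq_comm]

lemma tri_expand {d₁ d₂ d₃ p : ℕ} (X : Matrix (Fin d₁) (Fin p) ℂ) (Y : Matrix (Fin d₂) (Fin p) ℂ)
    (Z : Matrix (Fin d₃) (Fin p) ℂ) (u : Fin d₁ → ℂ) (v : Fin d₂ → ℂ) (w : Fin d₃ → ℂ) :
    ∑ r, (∑ i, X i r * u i) * (∑ j, Y j r * v j) * (∑ k, Z k r * w k) =
    ∑ i, ∑ j, ∑ k, u i * v j * w k * ∑ r, X i r * Y j r * Z k r := by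
  have h : ∀ r, (∑ i, X i r * u i) * (∑ j, Y j r * v j) * (∑ k, Z k r * w k) =
      ∑ i, ∑ j, ∑ k, u i * v j * w k * (X i r * Y j r * Z k r) := by
    intro r
    rw [mul_assoc, Finset.sum_mul]
    refine Finset.sum_congr rfl fun i _ => ?_
    rw [Finset.sum_mul_sum, Finset.mul_sum]
    refine Finset.sum_congr rfl fun j _ => ?_
    rw [Finset.mul_sum]
    refine Finset.sum_congr rfl fun k _ => ?_
    ring
  rw [Finset.sum_congr rfl fun r _ => h r]
  simp only [Finset.mul_sum]
  rw [Finset.sum_comm]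
  refine Finset.sum_congr rfl fun i _ => ?_
  rw [Finset.sum_comm]
  refine Finset.sum_congr rfl fun j _ => ?_
  rw [Finset.sum_comm]

lemma tri_dual {d₁ d₂ d₃ p : ℕ} (X : Matrix (Fin d₁) (Fin p) ℂ) (Y : Matrix (Fin d₂) (Fin p) ℂ)
    (Z : Matrix (Fin d₃) (Fin p) ℂ) (α : Module.Dual ℂ (Fin d₁ → ℂ))
    (β : Module.Dual ℂ (Fin d₂ → ℂ)) (γ : Module.Dual ℂ (Fin d₃ → ℂ)) :
    ∑ r, α (fun i => X i r) * β (fun i => Y i r) * γ (fun i => Z i r) =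
    ∑ i, ∑ j, ∑ k, α (Pi.single i 1) * β (Pi.single j 1) * γ (Pi.single k 1) *
      ∑ r, X i r * Y j r * Z k r := by
  rw [← tri_expand X Y Z (fun i => α (Pi.single i 1)) (fun i => β (Pi.single i 1))
    (fun i => γ (Pi.single i 1))]
  refine Finset.sum_congr rfl fun r _ => ?_
  rw [dual_apply_sum α (fun i => X i r), dual_apply_sum β (fun i => Y i r),
    dual_apply_sum γ (fun i => Z i r)]

/-- Kruskal's uniqueness theorem for the CP decomposition of a third-order tensor. -/
theorem kruskal_cp_uniqueness {d₁ d₂ d₃ p : ℕ}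
    (X : Matrix (Fin d₁) (Fin p) ℂ) (Y : Matrix (Fin d₂) (Fin p) ℂ)
    (Z : Matrix (Fin d₃) (Fin p) ℂ)
    (X' : Matrix (Fin d₁) (Fin p) ℂ) (Y' : Matrix (Fin d₂) (Fin p) ℂ)
    (Z' : Matrix (Fin d₃) (Fin p) ℂ)
    (hKruskal : kRank X + kRank Y + kRank Z ≥ 2 * p + 2)
    (hdecomp : ∀ (i : Fin d₁) (j : Fin d₂) (k : Fin d₃),
      ∑ r : Fin p, X' i r * Y' j r * Z' k r = ∑ r : Fin p, X i r * Y j r * Z k r) :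
    ∃ (σ : Equiv.Perm (Fin p)) (lam mu nu : Fin p → ℂ),
      (∀ r, lam r ≠ 0 ∧ mu r ≠ 0 ∧ nu r ≠ 0 ∧ lam r * mu r * nu r = 1) ∧
      (∀ r i, X' i r = lam r * X i (σ r)) ∧
      (∀ r j, Y' j r = mu r * Y j (σ r)) ∧
      (∀ r k, Z' k r = nu r * Z k (σ r)) := by
  obtain ⟨ha, hx⟩ := kRank_spec X
  obtain ⟨hb, hy⟩ := kRank_spec Y
  obtain ⟨hd, hz⟩ := kRank_spec Z
  obtain ⟨σ, lam, mu, nu, h0, h1, h2, h3⟩ := kruskal_abstract (x' := fun r i => X' i r)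
    (y' := fun r i => Y' i r) (z' := fun r i => Z' i r) hx hy hz (by simpa using ha)
    (by simpa using hb) (by simpa using hd) (by simpa using hKruskal) (by
      intro α β γ
      rw [tri_dual X' Y' Z', tri_dual X Y Z]
      simp only [hdecomp])
  exact ⟨σ, lam, mu, nu, h0, fun r i => congrFun (h1 r) i, fun r i => congrFun (h2 r) i,
    fun r i => congrFun (h3 r) i⟩
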